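/- For every integer d, let M(d) be the 8×8 matrix with rows: (2(3d-3), -d, 0, 0, 0, 0, 0, 0); (0, 3d-4, -2d, 0, 0, 0, 0, 0); (2(d-2), 0, 0, -d(3d-2), d^2, 0, 0, 0); (0, 0, 2(3d-5), 0, 0, 0, -d, 0); (0, 0, 2(3d-5), 0, 0, -(3d-5), 0, 0); (0, 3d-3, -4d+4, 0, (3d-4)(3d-3), 0, 0, -(3d-4)d); (0, d-2, 0, 0, -d(3d-3), 0, 0, d^2); (0, 0, 0, 0, -(3d-4)d, d^2, 0, 0). Then det M(d) = -12 d^6 (3d-5)(d-1)(3d-4)(3d-2), and in particular det M(d) ≠ 0 for every integer d ≥ 2. -/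

import Mathlib

/-! Columns 3, 0 and 6 of `M8 d`, deleted successively together with the row of their pivot, each
have a single nonzero entry: `-d(3d-2)`, then `2(3d-3)`, then `-d`. Laplace expansion along them
(`det_eq_of_column_single`) leaves a 5×5 minor, whose determinant `det_minor5` computes by
expanding along the first row. The resulting factorization is nonzero for `d ≥ 2` because its
roots `0`, `5/3`, `1`, `4/3` and `2/3` are all less than `2`. -/

open Matrix

/-- The 8×8 matrix of the linear system determining eight characteristic numbers. -/
def M8 (d : ℤ) : Matrix (Fin 8) (Fin 8) ℤ :=
  !![2*(3*d-3), -d, 0, 0, 0, 0, 0, 0;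
     0, 3*d-4, -2*d, 0, 0, 0, 0, 0;
     2*(d-2), 0, 0, -d*(3*d-2), d^2, 0, 0, 0;
     0, 0, 2*(3*d-5), 0, 0, 0, -d, 0;
     0, 0, 2*(3*d-5), 0, 0, -(3*d-5), 0, 0;
     0, 3*d-3, -4*d+4, 0, (3*d-4)*(3*d-3), 0, 0, -(3*d-4)*d;
     0, d-2, 0, 0, -d*(3*d-3), 0, 0, d^2;
     0, 0, 0, 0, -(3*d-4)*d, d^2, 0, 0]

/-- Laplace expansion along a column `j` whose only possibly nonzero entry is in row `i`, with
the complementary minor `B` given explicitly. -/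
theorem det_eq_of_column_single {n : ℕ} (A : Matrix (Fin (n + 1)) (Fin (n + 1)) ℤ)
    (i j : Fin (n + 1)) (B : Matrix (Fin n) (Fin n) ℤ)
    (hB : A.submatrix i.succAbove j.succAbove = B) (h : ∀ k, k ≠ i → A k j = 0) :
    A.det = (-1) ^ (i + j : ℕ) * A i j * B.det := by
  rw [det_succ_column A j, Finset.sum_eq_single i, hB]
  · intro k _ hk
    simp [h k hk]
  · simp

theorem det_minor5 (d : ℤ) :
    (!![3*d-4, -2*d, 0, 0, 0;
        0, 2*(3*d-5), 0, -(3*d-5), 0;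
        3*d-3, -4*d+4, (3*d-4)*(3*d-3), 0, -(3*d-4)*d;
        d-2, 0, -d*(3*d-3), 0, d^2;
        0, 0, -(3*d-4)*d, d^2, 0] : Matrix (Fin 5) (Fin 5) ℤ).det =
      -2 * d^4 * (3*d-5) * (3*d-4) := by
  simp [det_succ_row_zero, Fin.sum_univ_succ, Fin.succAbove]
  ring

theorem det_M8_eq (d : ℤ) :
    (M8 d).det = -12 * d^6 * (3*d-5) * (d-1) * (3*d-4) * (3*d-2) := by
  rw [det_eq_of_column_single (M8 d) 2 3
      !![2*(3*d-3), -d, 0, 0, 0, 0, 0;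
         0, 3*d-4, -2*d, 0, 0, 0, 0;
         0, 0, 2*(3*d-5), 0, 0, -d, 0;
         0, 0, 2*(3*d-5), 0, -(3*d-5), 0, 0;
         0, 3*d-3, -4*d+4, (3*d-4)*(3*d-3), 0, 0, -(3*d-4)*d;
         0, d-2, 0, -d*(3*d-3), 0, 0, d^2;
         0, 0, 0, -(3*d-4)*d, d^2, 0, 0]
      (by ext a b; fin_cases a <;> fin_cases b <;> rfl)
      (by intro k hk; fin_cases k <;> first | rfl | exact absurd rfl hk),
    det_eq_of_column_single _ 0 0
      !![3*d-4, -2*d, 0, 0, 0, 0;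
         0, 2*(3*d-5), 0, 0, -d, 0;
         0, 2*(3*d-5), 0, -(3*d-5), 0, 0;
         3*d-3, -4*d+4, (3*d-4)*(3*d-3), 0, 0, -(3*d-4)*d;
         d-2, 0, -d*(3*d-3), 0, 0, d^2;
         0, 0, -(3*d-4)*d, d^2, 0, 0]
      (by ext a b; fin_cases a <;> fin_cases b <;> rfl)
      (by intro k hk; fin_cases k <;> first | rfl | exact absurd rfl hk),
    det_eq_of_column_single _ 1 4
      !![3*d-4, -2*d, 0, 0, 0;
         0, 2*(3*d-5), 0, -(3*d-5), 0;
         3*d-3, -4*d+4, (3*d-4)*(3*d-3), 0, -(3*d-4)*d;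
         d-2, 0, -d*(3*d-3), 0, d^2;
         0, 0, -(3*d-4)*d, d^2, 0]
      (by ext a b; fin_cases a <;> fin_cases b <;> rfl)
      (by intro k hk; fin_cases k <;> first | rfl | exact absurd rfl hk),
    det_minor5]
  simp [M8]
  ring

/-- `det M(d) = -12 d⁶ (3d-5)(d-1)(3d-4)(3d-2)`, which is nonzero for every
integer `d ≥ 2`. -/
theorem det_M8 :
    (∀ d : ℤ, (M8 d).det = -12 * d^6 * (3*d-5) * (d-1) * (3*d-4) * (3*d-2)) ∧
      ∀ d : ℤ, 2 ≤ d → (M8 d).det ≠ 0 := by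
  refine ⟨det_M8_eq, fun d hd => ?_⟩
  rw [det_M8_eq]
  have h0 : d ≠ 0 := by lia
  have h1 : 3*d-5 ≠ 0 := by lia
  have h2 : d-1 ≠ 0 := by lia
  have h3 : 3*d-4 ≠ 0 := by lia
  have h4 : 3*d-2 ≠ 0 := by lia
  simp [h0, h1, h2, h3, h4]
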